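/- arXiv:1005.3338 — 4 statements merged into one kernel-verified Lean document; each statement's English description precedes it below -/
import Mathlib

section
/- For all real S ≥ 0, I₂₁ ≥ 0 and I₁₂ > 0, sup_{ρ∈[0,1]} min( log₂(1+S+I₂₁+2ρ√(S·I₂₁)), log₂(1+(1−ρ²)I₁₂) + log₂(1+(1−ρ²)S/(1+(1−ρ²)I₁₂)) ) ≤ sup_{ρ∈[0,1]} min( log₂(1+S+I₂₁+2ρ√(S·I₂₁)) − 1, log₂(1+(1−ρ)I₁₂) + log₂(2+S/I₁₂) − 2 ) + 2. In other words, the largest R₁ permitted by the outer-bound constraints (over all ρ ∈ [0,1]) exceeds the largest R₁ permitted by the inner-bound constraints (over all ρ ∈ [0,1]) by at most 2 bits. -/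
open Real Set

/-!
The inner bound at `ρ = 0` is already within two bits of the outer bound at every `ρ`.
In the first constraint, `2√(S I₂₁) ≤ S + I₂₁` shows that correlating the inputs at most doubles
the received power, which costs one bit on top of the one subtracted in the inner bound. In the
second, the outer expression telescopes to `log₂ (1 + (1 - ρ²) (I₁₂ + S))`, whose argument is at
most `1 + I₁₂ + S ≤ (1 + I₁₂) (2 + S / I₁₂)`.
-/

theorem two_mul_sqrt_mul_le_add {a b : ℝ} (ha : 0 ≤ a) (hb : 0 ≤ b) : 2 * √(a * b) ≤ a + b := by
  calc 2 * √(a * b) = 2 * √a * √b := by rw [sqrt_mul ha, mul_assoc]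
    _ ≤ √a ^ 2 + √b ^ 2 := two_mul_le_add_sq _ _
    _ = a + b := by rw [sq_sqrt ha, sq_sqrt hb]

theorem abs_two_mul_mul_sqrt_mul_le_add {a b ρ : ℝ} (ha : 0 ≤ a) (hb : 0 ≤ b) (hρ : |ρ| ≤ 1) :
    |2 * ρ * √(a * b)| ≤ a + b := by
  calc |2 * ρ * √(a * b)| = |ρ| * (2 * √(a * b)) := by
        rw [abs_mul, abs_mul, abs_two, abs_of_nonneg (sqrt_nonneg _)]
        ring
    _ ≤ 2 * √(a * b) := mul_le_of_le_one_left (by positivity) hρ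
    _ ≤ a + b := two_mul_sqrt_mul_le_add ha hb

section

variable {b x y : ℝ}

theorem logb_add_logb_one_add_div (hx : x ≠ 0) (hxy : x + y ≠ 0) :
    logb b x + logb b (1 + y / x) = logb b (x + y) := by
  rw [one_add_div hx, ← logb_mul hx (div_ne_zero hxy hx), mul_div_cancel₀ _ hx]

theorem logb_one_add_mul_add_logb_one_add_mul_div_le {t : ℝ} (hb : 1 < b) (hx : 0 ≤ x) (hy : 0 ≤ y)
    (ht₀ : 0 ≤ t) (ht₁ : t ≤ 1) :
    logb b (1 + t * x) + logb b (1 + t * y / (1 + t * x)) ≤ logb b (1 + x + y) := by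
  have hpos : 0 < 1 + t * x := by positivity
  have htx : t * x ≤ x := mul_le_of_le_one_left hx ht₁
  have hty : t * y ≤ y := mul_le_of_le_one_left hy ht₁
  rw [logb_add_logb_one_add_div hpos.ne' (by positivity)]
  exact logb_le_logb_of_le hb (by positivity) (by linarith)

theorem one_add_add_le_one_add_mul_two_add_div (hx : 0 < x) (hy : 0 ≤ y) :
    1 + x + y ≤ (1 + x) * (2 + y / x) := by
  have hexpand : (1 + x) * (2 + y / x) = (1 + x + y) + (1 + x + y / x) := by
    field_simp
    ring
  rw [hexpand]
  exact le_add_of_nonneg_right (by positivity)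

theorem logb_one_add_add_le_logb_one_add_add_logb_two_add_div (hb : 1 < b) (hx : 0 < x)
    (hy : 0 ≤ y) : logb b (1 + x + y) ≤ logb b (1 + x) + logb b (2 + y / x) := by
  rw [← logb_mul (by positivity) (by positivity)]
  exact logb_le_logb_of_le hb (by positivity) (one_add_add_le_one_add_mul_two_add_div hx hy)

end

/-- The cooperative bound `log₂ (1 + S + I + 2ρ√(S I))` on the individual rate: the capacity of the
link to a receiver that sees two inputs of powers `S` and `I` with correlation coefficient `ρ`.
It occurs in both the outer and the inner bound. -/
noncomputable def cooperativeRate (S I ρ : ℝ) : ℝ :=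
  logb 2 (1 + S + I + 2 * ρ * √(S * I))

/-- The outer bound on the individual rate `R₁` for inputs with correlation coefficient `ρ`. -/
noncomputable def outerRate (S I₂₁ I₁₂ ρ : ℝ) : ℝ :=
  min (cooperativeRate S I₂₁ ρ)
    (logb 2 (1 + (1 - ρ ^ 2) * I₁₂) +
      logb 2 (1 + (1 - ρ ^ 2) * S / (1 + (1 - ρ ^ 2) * I₁₂)))

/-- The achievable bound on the individual rate `R₁` for inputs with correlation coefficient `ρ`;
it is meaningful for `I₁₂ ≠ 0` only, because of the quotient `S / I₁₂`. -/
noncomputable def innerRate (S I₂₁ I₁₂ ρ : ℝ) : ℝ :=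
  min (cooperativeRate S I₂₁ ρ - 1)
    (logb 2 (1 + (1 - ρ) * I₁₂) + logb 2 (2 + S / I₁₂) - 2)

theorem cooperativeRate_le_cooperativeRate_zero_add_one {S I ρ : ℝ} (hS : 0 ≤ S) (hI : 0 ≤ I)
    (hρ : |ρ| ≤ 1) : cooperativeRate S I ρ ≤ cooperativeRate S I 0 + 1 := by
  obtain ⟨hlower, hupper⟩ := abs_le.mp (abs_two_mul_mul_sqrt_mul_le_add hS hI hρ)
  calc cooperativeRate S I ρ ≤ logb 2 ((1 + S + I + 2 * 0 * √(S * I)) * 2) :=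
        logb_le_logb_of_le one_lt_two (by linarith) (by linarith)
    _ = cooperativeRate S I 0 + 1 := by
        rw [logb_mul (by linarith) two_ne_zero, logb_self_eq_one one_lt_two, cooperativeRate]

section

variable {S I₂₁ I₁₂ ρ : ℝ}

theorem outerRate_le_innerRate_zero_add_two (hS : 0 ≤ S) (hI₂₁ : 0 ≤ I₂₁) (hI₁₂ : 0 < I₁₂)
    (hρ : |ρ| ≤ 1) : outerRate S I₂₁ I₁₂ ρ ≤ innerRate S I₂₁ I₁₂ 0 + 2 := by
  rw [outerRate, innerRate, ← min_add_add_right]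
  refine min_le_min ?cooperative ?relayed
  case cooperative =>
    linarith [cooperativeRate_le_cooperativeRate_zero_add_one hS hI₂₁ hρ]
  case relayed =>
    have hvar_nonneg : 0 ≤ 1 - ρ ^ 2 := sub_nonneg.mpr ((sq_le_one_iff_abs_le_one ρ).mpr hρ)
    have hvar_le_one : 1 - ρ ^ 2 ≤ 1 := sub_le_self 1 (sq_nonneg ρ)
    rw [sub_add_cancel, sub_zero, one_mul]
    calc logb 2 (1 + (1 - ρ ^ 2) * I₁₂) + logb 2 (1 + (1 - ρ ^ 2) * S / (1 + (1 - ρ ^ 2) * I₁₂))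
        ≤ logb 2 (1 + I₁₂ + S) :=
          logb_one_add_mul_add_logb_one_add_mul_div_le one_lt_two hI₁₂.le hS hvar_nonneg hvar_le_one
      _ ≤ logb 2 (1 + I₁₂) + logb 2 (2 + S / I₁₂) :=
          logb_one_add_add_le_logb_one_add_add_logb_two_add_div one_lt_two hI₁₂ hS

theorem innerRate_le_cooperativeRate_zero (hS : 0 ≤ S) (hI₂₁ : 0 ≤ I₂₁) (hρ : |ρ| ≤ 1) :
    innerRate S I₂₁ I₁₂ ρ ≤ cooperativeRate S I₂₁ 0 :=
  (min_le_left _ _).trans <|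
    sub_le_iff_le_add.mpr (cooperativeRate_le_cooperativeRate_zero_add_one hS hI₂₁ hρ)

end

/-- The largest individual rate `R₁` permitted by the outer-bound constraints exceeds
the largest `R₁` permitted by the inner-bound constraints by at most 2 bits. -/
theorem individual_rate_two_bit_gap (S I₂₁ I₁₂ : ℝ) (hS : 0 ≤ S) (hI₂₁ : 0 ≤ I₂₁)
    (hI₁₂ : 0 < I₁₂) :
    sSup ((fun ρ : ℝ =>
        min (Real.logb 2 (1 + S + I₂₁ + 2 * ρ * Real.sqrt (S * I₂₁)))
          (Real.logb 2 (1 + (1 - ρ ^ 2) * I₁₂) +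
            Real.logb 2 (1 + (1 - ρ ^ 2) * S / (1 + (1 - ρ ^ 2) * I₁₂)))) ''
        Set.Icc (0 : ℝ) 1) ≤
      sSup ((fun ρ : ℝ =>
        min (Real.logb 2 (1 + S + I₂₁ + 2 * ρ * Real.sqrt (S * I₂₁)) - 1)
          (Real.logb 2 (1 + (1 - ρ) * I₁₂) + Real.logb 2 (2 + S / I₁₂) - 2)) ''
        Set.Icc (0 : ℝ) 1) + 2 := by
  change sSup (outerRate S I₂₁ I₁₂ '' Icc 0 1) ≤ sSup (innerRate S I₂₁ I₁₂ '' Icc 0 1) + 2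
  have abs_le_one {ρ : ℝ} (hρ : ρ ∈ Icc (0 : ℝ) 1) : |ρ| ≤ 1 :=
    (abs_of_nonneg hρ.1).trans_le hρ.2
  have inner_bddAbove : BddAbove (innerRate S I₂₁ I₁₂ '' Icc 0 1) :=
    ⟨cooperativeRate S I₂₁ 0, forall_mem_image.mpr fun _ hρ =>
      innerRate_le_cooperativeRate_zero hS hI₂₁ (abs_le_one hρ)⟩
  have inner_zero_le : innerRate S I₂₁ I₁₂ 0 ≤ sSup (innerRate S I₂₁ I₁₂ '' Icc 0 1) :=
    le_csSup inner_bddAbove (mem_image_of_mem _ (left_mem_Icc.mpr zero_le_one))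
  refine csSup_le ((nonempty_Icc.mpr zero_le_one).image _) (forall_mem_image.mpr fun ρ hρ => ?_)
  calc outerRate S I₂₁ I₁₂ ρ ≤ innerRate S I₂₁ I₁₂ 0 + 2 :=
        outerRate_le_innerRate_zero_add_two hS hI₂₁ hI₁₂ (abs_le_one hρ)
    _ ≤ sSup (innerRate S I₂₁ I₁₂ '' Icc 0 1) + 2 := by gcongr
end

section
/- For all real S₁ ≥ 0, S₂ ≥ 0, I₁₂ > 0 and I₂₁ > 0, sup_{ρ∈[0,1]} min( log₂(1+(1−ρ²)S₁/(1+(1−ρ²)I₁₂)) + log₂(1+S₂+I₁₂+2ρ√(S₂·I₁₂)), log₂(1+(1−ρ²)S₂/(1+(1−ρ²)I₂₁)) + log₂(1+S₁+I₂₁+2ρ√(S₁·I₂₁)) ) ≤ sup_{ρ∈[0,1]} min( log₂(2+S₁/I₁₂) + log₂(1+S₂+I₁₂+2ρ√(S₂·I₁₂)) − 2, log₂(2+S₂/I₂₁) + log₂(1+S₁+I₂₁+2ρ√(S₁·I₂₁)) − 2 ) + 2. In other words, the largest sum rate R₁+R₂ permitted by the outer-bound constraints exceeds the largest sum rate permitted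 by the inner-bound constraints by at most 2 bits. -/
open Real Set

/-!
The two suprema can be compared at one and the same correlation `ρ`. The terms
`log₂ (1 + S + I + 2 ρ √(S I))` of the outer and inner bounds coincide, and
`(1 - ρ²) S / (1 + (1 - ρ²) I) ≤ S / I` controls the other terms, so the whole gap is the `2`
subtracted in the inner bound. The inner bound is nondecreasing in `ρ ≥ 0`, hence bounded above on
`[0, 1]`, so that its supremum is a genuine one.
-/

theorem csSup_image_le_csSup_image_add {ι α : Type*} [ConditionallyCompleteLattice α] [Add α]
    [AddRightMono α] {f g : ι → α} {s : Set ι} {c : α} (hs : s.Nonempty)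
    (hg : BddAbove (g '' s)) (hfg : ∀ x ∈ s, f x ≤ g x + c) :
    sSup (f '' s) ≤ sSup (g '' s) + c := by
  refine csSup_le (hs.image f) (forall_mem_image.2 fun x hx => ?_)
  calc f x ≤ g x + c := hfg x hx
    _ ≤ sSup (g '' s) + c := by gcongr; exact le_csSup hg (mem_image_of_mem g hx)

theorem mul_div_one_add_mul_le_div {K : Type*} [Field K] [LinearOrder K] [IsStrictOrderedRing K]
    {a b t : K} (ha : 0 ≤ a) (hb : 0 < b) (ht : 0 ≤ t) : t * a / (1 + t * b) ≤ a / b := by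
  rw [div_le_div_iff₀ (by positivity) hb]
  linarith

/-- One of the two constraints on `R₁ + R₂` in the outer bound, at input correlation `ρ`: `S` is the
SNR of one user, `S'` that of the other, and `I` the INR occurring in the constraint. The second
constraint is obtained by exchanging the users. -/
noncomputable def outerSumRateBound (S S' I ρ : ℝ) : ℝ :=
  logb 2 (1 + (1 - ρ ^ 2) * S / (1 + (1 - ρ ^ 2) * I)) + logb 2 (1 + S' + I + 2 * ρ * √(S' * I))

/-- One of the two constraints on `R₁ + R₂` in the achievable region, with the same parameters as
`outerSumRateBound`. -/
noncomputable def innerSumRateBound (S S' I ρ : ℝ) : ℝ :=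
  logb 2 (2 + S / I) + logb 2 (1 + S' + I + 2 * ρ * √(S' * I)) - 2

theorem outerSumRateBound_le_innerSumRateBound_add_two {S I ρ : ℝ} (S' : ℝ) (hS : 0 ≤ S)
    (hI : 0 < I) (hρ : |ρ| ≤ 1) :
    outerSumRateBound S S' I ρ ≤ innerSumRateBound S S' I ρ + 2 := by
  have ht : 0 ≤ 1 - ρ ^ 2 := sub_nonneg.2 ((sq_le_one_iff_abs_le_one ρ).2 hρ)
  have hlog : logb 2 (1 + (1 - ρ ^ 2) * S / (1 + (1 - ρ ^ 2) * I)) ≤ logb 2 (2 + S / I) := by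
    refine logb_le_logb_of_le one_lt_two (by positivity) ?_
    exact add_le_add one_le_two (mul_div_one_add_mul_le_div hS hI ht)
  unfold outerSumRateBound innerSumRateBound
  linarith

theorem monotoneOn_innerSumRateBound {S' I : ℝ} (S : ℝ) (hS' : 0 ≤ S') (hI : 0 ≤ I) :
    MonotoneOn (innerSumRateBound S S' I) (Ici 0) := by
  intro ρ (hρ : 0 ≤ ρ) σ _ hρσ
  have hlog : logb 2 (1 + S' + I + 2 * ρ * √(S' * I)) ≤ logb 2 (1 + S' + I + 2 * σ * √(S' * I)) :=
    logb_le_logb_of_le one_lt_two (by positivity) (by gcongr)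
  unfold innerSumRateBound
  gcongr

/-- The largest sum rate `R₁ + R₂` permitted by the outer-bound constraints exceeds
the largest sum rate permitted by the inner-bound constraints by at most 2 bits. -/
theorem sum_rate_two_bit_gap (S₁ S₂ I₁₂ I₂₁ : ℝ) (hS₁ : 0 ≤ S₁) (hS₂ : 0 ≤ S₂)
    (hI₁₂ : 0 < I₁₂) (hI₂₁ : 0 < I₂₁) :
    sSup ((fun ρ : ℝ =>
        min (Real.logb 2 (1 + (1 - ρ ^ 2) * S₁ / (1 + (1 - ρ ^ 2) * I₁₂)) +
              Real.logb 2 (1 + S₂ + I₁₂ + 2 * ρ * Real.sqrt (S₂ * I₁₂)))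
          (Real.logb 2 (1 + (1 - ρ ^ 2) * S₂ / (1 + (1 - ρ ^ 2) * I₂₁)) +
              Real.logb 2 (1 + S₁ + I₂₁ + 2 * ρ * Real.sqrt (S₁ * I₂₁)))) ''
        Set.Icc (0 : ℝ) 1) ≤
      sSup ((fun ρ : ℝ =>
        min (Real.logb 2 (2 + S₁ / I₁₂) +
              Real.logb 2 (1 + S₂ + I₁₂ + 2 * ρ * Real.sqrt (S₂ * I₁₂)) - 2)
          (Real.logb 2 (2 + S₂ / I₂₁) +
              Real.logb 2 (1 + S₁ + I₂₁ + 2 * ρ * Real.sqrt (S₁ * I₂₁)) - 2)) ''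
        Set.Icc (0 : ℝ) 1) + 2 := by
  change sSup ((fun ρ => min (outerSumRateBound S₁ S₂ I₁₂ ρ) (outerSumRateBound S₂ S₁ I₂₁ ρ)) ''
      Icc 0 1) ≤
    sSup ((fun ρ => min (innerSumRateBound S₁ S₂ I₁₂ ρ) (innerSumRateBound S₂ S₁ I₂₁ ρ)) ''
      Icc 0 1) + 2
  have hmono := (monotoneOn_innerSumRateBound S₁ hS₂ hI₁₂.le).min
    (monotoneOn_innerSumRateBound S₂ hS₁ hI₂₁.le)
  have hbdd := hmono.map_bddAbove Icc_subset_Ici_self ⟨1, fun _ hρ => hρ.2, zero_le_one' ℝ⟩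
  refine csSup_image_le_csSup_image_add (nonempty_Icc.2 zero_le_one) hbdd fun ρ hρ => ?_
  have hρ_abs : |ρ| ≤ 1 := abs_le.2 ⟨by linarith [hρ.1], hρ.2⟩
  rw [← min_add_add_right]
  exact min_le_min (outerSumRateBound_le_innerSumRateBound_add_two S₂ hS₁ hI₁₂ hρ_abs)
    (outerSumRateBound_le_innerSumRateBound_add_two S₁ hS₂ hI₂₁ hρ_abs)
end

section
/- Let 1/3 ≤ α < 1 and let ρ : (1,∞) → ℝ be a function such that for every s > 1, ρ(s) is the unique element of [0,1] satisfying 2·s^{(3α+1)/2}·ρ(s)⁴ + s^α·ρ(s)³ − 4·(s^{(3α+1)/2} + s^{(α+1)/2})·ρ(s)² − (2 + s + 2·s^α)·ρ(s) + 2·(s^{(3α+1)/2} + s^{(α+1)/2}) = 0. Define R(s) = log₂( (1 + s + s^α + 2·ρ(s)·s^{(α+1)/2}) / (1 + (1−ρ(s)²)·s^α) ). Then R(s)/log₂(s) tends to (3 − α)/4 as s → ∞. -/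
open Real Filter

/-!
Put `S = s`, `I = s ^ α`, `u = 1 - r ^ 2`. In terms of `u` the quartic reads
`2 √(S I) I u² + 4 √(S I) u = r (2 + S + 2 I - I r²) + 2 √(S I)`.
The right side is at most of order `max S I`, and at least so if `r ≥ 1/2`; completing the square on
the left then gives `(1 + u I)² ≍ I max S I / √(S I)`. If `r ≤ 1/2`, then `u ≥ 3/4`, and the lower
bound persists because `α ≥ 1/3` means `max S I ≤ √(S I) I`. As the output variance has order
`max S I`, the squared variance ratio has order `max S I √(S I) / I`, a power of `s` whose exponent
is twice the limit.
-/

section LogAsymptotics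

open Asymptotics Topology

lemma isBigO_log_sub_log_of_isTheta {ι : Type*} {l : Filter ι} {f g : ι → ℝ} (h : f =Θ[l] g) :
    (fun x => log (f x) - log (g x)) =O[l] fun _ => (1 : ℝ) := by
  obtain ⟨c, hc, hfg⟩ := h.isBigO.exists_pos
  obtain ⟨d, hd, hgf⟩ := h.isBigO_symm.exists_pos
  refine IsBigO.of_bound (max |log c| |log d|) ?_
  filter_upwards [hfg.bound, hgf.bound] with x hfx hgx
  rw [norm_one, mul_one, norm_eq_abs, abs_le', neg_sub]
  rcases eq_or_ne (g x) 0 with hg | hg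
  · have hf : f x = 0 := by simpa [hg] using hfx
    simp [hf, hg]
  have hf : f x ≠ 0 := by
    intro hf
    exact hg (by simpa [hf] using hgx)
  have hlog_f : log (f x) ≤ log c + log (g x) := by
    rw [← log_abs (f x), ← log_abs (g x), ← log_mul hc.ne' (abs_ne_zero.2 hg)]
    exact log_le_log (abs_pos.2 hf) hfx
  have hlog_g : log (g x) ≤ log d + log (f x) := by
    rw [← log_abs (f x), ← log_abs (g x), ← log_mul hd.ne' (abs_ne_zero.2 hf)]
    exact log_le_log (abs_pos.2 hg) hgx
  constructor
  · exact (sub_le_iff_le_add.2 hlog_f).trans ((le_abs_self _).trans (le_max_left _ _))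
  · exact (sub_le_iff_le_add.2 hlog_g).trans ((le_abs_self _).trans (le_max_right _ _))

lemma tendsto_logb_self_of_isTheta_rpow {f : ℝ → ℝ} {γ : ℝ} (h : f =Θ[atTop] fun s => s ^ γ) :
    Tendsto (fun s => logb s (f s)) atTop (𝓝 γ) := by
  have herror : Tendsto (fun s => (log (f s) - log (s ^ γ)) / log s) atTop (𝓝 0) :=
    ((isBigO_log_sub_log_of_isTheta h).trans_isLittleO
      isLittleO_const_log_atTop).tendsto_div_nhds_zero
  have hsum := herror.const_add γ
  rw [add_zero] at hsum
  refine hsum.congr' ?_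
  filter_upwards [eventually_gt_atTop 1] with s hs
  have hlog : log s ≠ 0 := (log_pos hs).ne'
  rw [log_rpow (zero_lt_one.trans hs), logb]
  field_simp
  ring

end LogAsymptotics

/-- Kramer's quartic polynomial in the correlation coefficient `r`, at signal-to-noise ratio `S`
and interference-to-noise ratio `I`; a root in `[0, 1]` is the correlation of the inputs. -/
noncomputable def kramerQuartic (S I r : ℝ) : ℝ :=
  2 * (√(S * I) * I) * r ^ 4 + I * r ^ 3 - 4 * (√(S * I) * I + √(S * I)) * r ^ 2 -
    (2 + S + 2 * I) * r + 2 * (√(S * I) * I + √(S * I))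

/-- The variance of a channel output under unit noise, when the two inputs have correlation `r`. -/
noncomputable def outputVariance (S I r : ℝ) : ℝ :=
  1 + S + I + 2 * r * √(S * I)

/-- The variance of a channel output conditioned on the intended input, when the two inputs have
correlation `r`. Dividing `outputVariance` by it gives the argument of the logarithm in the rate. -/
def residualVariance (I r : ℝ) : ℝ :=
  1 + (1 - r ^ 2) * I

section VarianceBounds

variable {S I r : ℝ}

lemma kramerQuartic_eq_zero_iff :
    kramerQuartic S I r = 0 ↔
      2 * (√(S * I) * I) * (1 - r ^ 2) ^ 2 + 4 * √(S * I) * (1 - r ^ 2) =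
        r * (2 + S + 2 * I - I * r ^ 2) + 2 * √(S * I) := by
  unfold kramerQuartic
  constructor <;> intro h <;> linarith

lemma sqrt_mul_le_max (hS : 0 ≤ S) (hI : 0 ≤ I) : √(S * I) ≤ max S I := by
  refine sqrt_le_iff.2 ⟨le_max_of_le_left hS, ?_⟩
  rw [sq]
  exact mul_le_mul (le_max_left S I) (le_max_right S I) hI (le_max_of_le_left hS)

lemma max_le_outputVariance (hS : 0 ≤ S) (hI : 0 ≤ I) (hr : 0 ≤ r) :
    max S I ≤ outputVariance S I r := by
  have hcross : 0 ≤ r * √(S * I) := by positivity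
  unfold outputVariance
  exact max_le (by linarith) (by linarith)

lemma outputVariance_le (hS : 1 ≤ S) (hI : 0 ≤ I) (hr : r ≤ 1) :
    outputVariance S I r ≤ 5 * max S I := by
  have hcross : r * √(S * I) ≤ max S I :=
    (mul_le_of_le_one_left (sqrt_nonneg _) hr).trans (sqrt_mul_le_max (by linarith) hI)
  unfold outputVariance
  linarith [le_max_left S I, le_max_right S I]

lemma residualVariance_pos (hI : 0 ≤ I) (hr : r ∈ Set.Icc 0 1) : 0 < residualVariance I r := by
  have hu : 0 ≤ 1 - r ^ 2 := sub_nonneg.2 (pow_le_one₀ hr.1 hr.2)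
  unfold residualVariance
  positivity

lemma residualVariance_sq_le (hS : 1 ≤ S) (hI : 1 ≤ I) (hr : r ∈ Set.Icc 0 1)
    (hroot : kramerQuartic S I r = 0) :
    residualVariance I r ^ 2 ≤ 9 * (I * max S I / √(S * I)) := by
  rw [kramerQuartic_eq_zero_iff] at hroot
  unfold residualVariance
  have hu : 0 ≤ 1 - r ^ 2 := sub_nonneg.2 (pow_le_one₀ hr.1 hr.2)
  have hB : 0 < √(S * I) := by positivity
  have hB_le : √(S * I) ≤ max S I := sqrt_mul_le_max (by linarith) (by linarith)
  set u := 1 - r ^ 2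
  set B := √(S * I)
  have hrhs : r * (2 + S + 2 * I - I * r ^ 2) + 2 * B ≤ 7 * max S I := by
    have hIr : I * r ^ 2 ≤ I := mul_le_of_le_one_right (by linarith) (pow_le_one₀ hr.1 hr.2)
    have hfactor : r * (2 + S + 2 * I - I * r ^ 2) ≤ 2 + S + 2 * I - I * r ^ 2 :=
      mul_le_of_le_one_left (by linarith) hr.2
    have hIr' : 0 ≤ I * r ^ 2 := by positivity
    linarith [le_max_left S I, le_max_right S I]
  have hleading : 2 * (B * I) * u ^ 2 ≤ 7 * max S I := by
    linarith [show 0 ≤ 4 * B * u by positivity]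
  have hsq : 2 * B * (u * I) ^ 2 ≤ 7 * (I * max S I) := calc
    2 * B * (u * I) ^ 2 = I * (2 * (B * I) * u ^ 2) := by ring
    _ ≤ I * (7 * max S I) := mul_le_mul_of_nonneg_left hleading (by linarith)
    _ = 7 * (I * max S I) := by ring
  have hB_le' : B ≤ I * max S I := hB_le.trans (le_mul_of_one_le_left (hB.le.trans hB_le) hI)
  rw [← mul_div_assoc, le_div_iff₀ hB]
  calc
    (1 + u * I) ^ 2 * B ≤ (2 + 2 * (u * I) ^ 2) * B := by
      gcongr
      linarith [sq_nonneg (1 - u * I)]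
    _ ≤ 9 * (I * max S I) := by linarith

lemma le_residualVariance_sq_of_half_le (hS : 0 < S) (hI : 0 < I) (hr : r ∈ Set.Icc (1 / 2) 1)
    (hroot : kramerQuartic S I r = 0) :
    I * max S I / √(S * I) ≤ 4 * residualVariance I r ^ 2 := by
  rw [kramerQuartic_eq_zero_iff] at hroot
  unfold residualVariance
  have hB : 0 < √(S * I) := by positivity
  have hr_sq : r ^ 2 ≤ 1 := pow_le_one₀ (by linarith [hr.1]) hr.2
  have hIr : I * r ^ 2 ≤ I := mul_le_of_le_one_right hI.le hr_sq
  set u := 1 - r ^ 2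
  set B := √(S * I)
  have hrhs : max S I / 2 ≤ r * (2 + S + 2 * I - I * r ^ 2) + 2 * B := by
    have hmax : max S I ≤ 2 + S + 2 * I - I * r ^ 2 := max_le (by linarith) (by linarith)
    have hprod : 1 / 2 * max S I ≤ r * (2 + S + 2 * I - I * r ^ 2) :=
      mul_le_mul hr.1 hmax (by positivity) (by linarith [hr.1])
    linarith
  rw [div_le_iff₀ hB]
  calc
    I * max S I = 2 * (I * (max S I / 2)) := by ring
    _ ≤ 2 * (I * (2 * (B * I) * u ^ 2 + 4 * B * u)) := by
      gcongr
      linarith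
    _ ≤ 4 * (1 + u * I) ^ 2 * B := by linarith

lemma le_residualVariance_sq_of_le_half (hS : 0 < S) (hI : 0 < I) (hr : r ∈ Set.Icc 0 (1 / 2))
    (hSI : max S I ≤ √(S * I) * I) :
    I * max S I / √(S * I) ≤ 4 * residualVariance I r ^ 2 := by
  have hu : 3 / 4 ≤ 1 - r ^ 2 := by
    linarith [pow_le_pow_left₀ hr.1 hr.2 2]
  have hres : 1 / 2 * I ≤ residualVariance I r := by
    unfold residualVariance
    linarith [mul_le_mul_of_nonneg_right hu hI.le]
  calc
    I * max S I / √(S * I) ≤ I * (√(S * I) * I) / √(S * I) := by gcongr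
    _ = 4 * (1 / 2 * I) ^ 2 := by
      field_simp
      ring
    _ ≤ 4 * residualVariance I r ^ 2 := by gcongr

lemma le_residualVariance_sq (hS : 0 < S) (hI : 0 < I) (hSI : max S I ≤ √(S * I) * I)
    (hr : r ∈ Set.Icc 0 1) (hroot : kramerQuartic S I r = 0) :
    I * max S I / √(S * I) ≤ 4 * residualVariance I r ^ 2 := by
  rcases le_total r (1 / 2) with hr_half | hr_half
  · exact le_residualVariance_sq_of_le_half hS hI ⟨hr.1, hr_half⟩ hSI
  · exact le_residualVariance_sq_of_half_le hS hI ⟨hr_half, hr.2⟩ hroot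

lemma le_varianceRatio_sq (hS : 1 ≤ S) (hI : 1 ≤ I) (hr : r ∈ Set.Icc 0 1)
    (hroot : kramerQuartic S I r = 0) :
    max S I * √(S * I) / I ≤ 9 * (outputVariance S I r / residualVariance I r) ^ 2 := by
  have hres : 0 < residualVariance I r := residualVariance_pos (by linarith) hr
  have hout : max S I ≤ outputVariance S I r :=
    max_le_outputVariance (by linarith) (by linarith) hr.1
  calc
    max S I * √(S * I) / I = 9 * (max S I ^ 2 / (9 * (I * max S I / √(S * I)))) := by
      field_simp
    _ ≤ 9 * (outputVariance S I r ^ 2 / residualVariance I r ^ 2) := by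
      gcongr
      exact residualVariance_sq_le hS hI hr hroot
    _ = 9 * (outputVariance S I r / residualVariance I r) ^ 2 := by rw [div_pow]

lemma varianceRatio_sq_le (hS : 1 ≤ S) (hI : 0 < I) (hSI : max S I ≤ √(S * I) * I)
    (hr : r ∈ Set.Icc 0 1) (hroot : kramerQuartic S I r = 0) :
    (outputVariance S I r / residualVariance I r) ^ 2 ≤ 100 * (max S I * √(S * I) / I) := by
  have hS' : 0 < S := by linarith
  have hM : 0 < max S I := lt_max_of_lt_left hS'
  have hout : 0 ≤ outputVariance S I r := hM.le.trans (max_le_outputVariance hS'.le hI.le hr.1)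
  calc
    (outputVariance S I r / residualVariance I r) ^ 2
        = 4 * (outputVariance S I r ^ 2 / (4 * residualVariance I r ^ 2)) := by
      rw [div_pow]
      field_simp
    _ ≤ 4 * ((5 * max S I) ^ 2 / (I * max S I / √(S * I))) := by
      gcongr
      · exact outputVariance_le hS hI.le hr.2
      · exact le_residualVariance_sq hS' hI hSI hr hroot
    _ = 100 * (max S I * √(S * I) / I) := by
      field_simp
      ring

end VarianceBounds

section PowerScaling

open Asymptotics

variable {s α : ℝ}

lemma sqrt_mul_rpow (hs : 0 < s) : √(s * s ^ α) = s ^ ((α + 1) / 2) := by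
  rw [mul_comm, ← rpow_add_one hs.ne', sqrt_eq_rpow, ← rpow_mul hs.le, mul_one_div]

lemma max_self_rpow (hs : 1 ≤ s) : max s (s ^ α) = s ^ max 1 α := by
  rw [(monotone_rpow_of_base_ge_one hs).map_max, rpow_one]

lemma max_self_rpow_le_sqrt_mul_rpow (hs : 1 ≤ s) (hα : 1 / 3 ≤ α) :
    max s (s ^ α) ≤ √(s * s ^ α) * s ^ α := by
  have hs' : 0 < s := by linarith
  rw [max_self_rpow hs, sqrt_mul_rpow hs', ← rpow_add hs']
  exact rpow_le_rpow_of_exponent_le hs (max_le (by linarith) (by linarith))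

lemma max_mul_sqrt_div_rpow (hs : 1 ≤ s) :
    max s (s ^ α) * √(s * s ^ α) / s ^ α = (s ^ ((2 * max 1 α + 1 - α) / 4)) ^ 2 := by
  have hs' : 0 < s := by linarith
  rw [max_self_rpow hs, sqrt_mul_rpow hs', ← rpow_add hs', ← rpow_sub hs',
    ← rpow_mul_natCast hs'.le]
  congr 1
  push_cast
  ring

lemma varianceRatio_isTheta_rpow (hα : 1 / 3 ≤ α) {ρ : ℝ → ℝ}
    (hρ : ∀ᶠ s in atTop, ρ s ∈ Set.Icc 0 1 ∧ kramerQuartic s (s ^ α) (ρ s) = 0) :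
    (fun s => outputVariance s (s ^ α) (ρ s) / residualVariance (s ^ α) (ρ s))
      =Θ[atTop] fun s => s ^ ((2 * max 1 α + 1 - α) / 4) := by
  constructor
  · refine IsBigO.of_pow two_ne_zero (IsBigO.of_bound 100 ?_)
    filter_upwards [hρ, eventually_ge_atTop 1] with s ⟨hr, hroot⟩ hs
    rw [Pi.pow_apply, Pi.pow_apply, norm_of_nonneg (sq_nonneg _), norm_of_nonneg (sq_nonneg _),
      ← max_mul_sqrt_div_rpow hs]
    exact varianceRatio_sq_le hs (by positivity) (max_self_rpow_le_sqrt_mul_rpow hs hα) hr hroot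
  · refine IsBigO.of_pow two_ne_zero (IsBigO.of_bound 9 ?_)
    filter_upwards [hρ, eventually_ge_atTop 1] with s ⟨hr, hroot⟩ hs
    rw [Pi.pow_apply, Pi.pow_apply, norm_of_nonneg (sq_nonneg _), norm_of_nonneg (sq_nonneg _),
      ← max_mul_sqrt_div_rpow hs]
    exact le_varianceRatio_sq hs (one_le_rpow hs (by linarith)) hr hroot

end PowerScaling

theorem kramer_gdof_mid_general {α : ℝ} (hα : 1 / 3 ≤ α) {ρ : ℝ → ℝ}
    (hρ : ∀ᶠ s in atTop,
      ρ s ∈ Set.Icc (0 : ℝ) 1 ∧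
      2 * s ^ ((3 * α + 1) / 2) * ρ s ^ 4 + s ^ α * ρ s ^ 3 -
          4 * (s ^ ((3 * α + 1) / 2) + s ^ ((α + 1) / 2)) * ρ s ^ 2 -
          (2 + s + 2 * s ^ α) * ρ s +
          2 * (s ^ ((3 * α + 1) / 2) + s ^ ((α + 1) / 2)) = 0) :
    Tendsto (fun s : ℝ =>
        Real.logb 2 ((1 + s + s ^ α + 2 * ρ s * s ^ ((α + 1) / 2)) /
            (1 + (1 - ρ s ^ 2) * s ^ α)) / Real.logb 2 s)
      atTop (nhds ((2 * max 1 α + 1 - α) / 4)) := by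
  have hroot : ∀ᶠ s in atTop, ρ s ∈ Set.Icc 0 1 ∧ kramerQuartic s (s ^ α) (ρ s) = 0 := by
    filter_upwards [hρ, eventually_gt_atTop 0] with s ⟨hr, hquartic⟩ hs
    have hexp : s ^ ((3 * α + 1) / 2) = s ^ ((α + 1) / 2) * s ^ α := by
      rw [← rpow_add hs]
      ring_nf
    rw [hexp] at hquartic
    exact ⟨hr, by rwa [kramerQuartic, sqrt_mul_rpow hs]⟩
  refine (tendsto_logb_self_of_isTheta_rpow (varianceRatio_isTheta_rpow hα hroot)).congr' ?_
  filter_upwards [eventually_gt_atTop 0] with s hs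
  rw [outputVariance, residualVariance, sqrt_mul_rpow hs]
  exact (div_div_div_cancel_right₀ (log_pos one_lt_two).ne' _ _).symm

/-- Generalized degrees-of-freedom of Kramer's feedback scheme for `1/3 ≤ α < 1`. -/
theorem kramer_gdof_mid (α : ℝ) (hα0 : 1 / 3 ≤ α) (hα1 : α < 1) (ρ : ℝ → ℝ)
    (hρ : ∀ s : ℝ, 1 < s →
      ρ s ∈ Set.Icc (0 : ℝ) 1 ∧
      (2 * s ^ ((3 * α + 1) / 2) * ρ s ^ 4 + s ^ α * ρ s ^ 3 -
          4 * (s ^ ((3 * α + 1) / 2) + s ^ ((α + 1) / 2)) * ρ s ^ 2 -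
          (2 + s + 2 * s ^ α) * ρ s +
          2 * (s ^ ((3 * α + 1) / 2) + s ^ ((α + 1) / 2)) = 0) ∧
      ∀ r ∈ Set.Icc (0 : ℝ) 1,
        2 * s ^ ((3 * α + 1) / 2) * r ^ 4 + s ^ α * r ^ 3 -
            4 * (s ^ ((3 * α + 1) / 2) + s ^ ((α + 1) / 2)) * r ^ 2 -
            (2 + s + 2 * s ^ α) * r +
            2 * (s ^ ((3 * α + 1) / 2) + s ^ ((α + 1) / 2)) = 0 → r = ρ s) :
    Tendsto (fun s : ℝ =>
        Real.logb 2 ((1 + s + s ^ α + 2 * ρ s * s ^ ((α + 1) / 2)) /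
            (1 + (1 - ρ s ^ 2) * s ^ α)) / Real.logb 2 s)
      atTop (nhds ((3 - α) / 4)) := by
  rw [show (3 - α) / 4 = (2 * max 1 α + 1 - α) / 4 by rw [max_eq_left hα1.le]; ring]
  exact kramer_gdof_mid_general hα0
    ((eventually_gt_atTop 1).mono fun s hs => ⟨(hρ s hs).1, (hρ s hs).2.1⟩)
end

section
/- Let α ≥ 0. Define for s > 1 the symmetric achievable feedback rate R_sym(s, s^α) = max( (1/2)·log₂(1 + s^α), (1/2)·log₂( ((1 + s + s^α)² − s/(1+s^α)) / (1 + 2·s^α) ) ). Then R_sym(s, s^α)/log₂(s) tends to max(α/2, 1 − α/2) as s → ∞. -/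
open Real Filter

/-!
Replacing a function by one of the same order changes its logarithm by a bounded amount, which
is negligible against `log s`. So dividing by `log s` only sees the exponent `β` of a quantity of
order `s ^ β`, and a sum of positive powers has the largest of the exponents. Thus `1 + INR` has
exponent `max 0 α`, the power `1 + SNR + INR` has exponent `max 1 α`, and the correction
`SNR / (1 + INR)` is of lower order than `(1 + SNR + INR) ^ 2`, which leaves the exponents
`max 0 α` and `2 * max 1 α - max 0 α` inside the two logarithms.
-/

open Asymptotics Topology

section GrowthExponent

variable {ι : Type*} {l : Filter ι} {f g u : ι → ℝ} {a b β : ℝ}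

theorem isBigO_one_log_sub_log (hfg : f =Θ[l] g) (hg : ∀ᶠ x in l, g x ≠ 0) :
    (fun x => log (f x) - log (g x)) =O[l] (fun _ => (1 : ℝ)) := by
  obtain ⟨C, hC, hfC⟩ := hfg.isBigO.exists_pos
  obtain ⟨D, hD, hgD⟩ := hfg.isBigO_symm.exists_pos
  refine IsBigO.of_bound (max (log C) (log D)) ?_
  filter_upwards [hfC.bound, hgD.bound, hg, hfg.eq_zero_iff] with x hf_le hg_le hgx hzero
  have hfx : f x ≠ 0 := mt hzero.1 hgx
  have upper : log (f x) ≤ log C + log (g x) := by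
    rw [← log_abs (f x), ← log_abs (g x), ← log_mul hC.ne' (abs_ne_zero.2 hgx)]
    exact log_le_log (abs_pos.2 hfx) hf_le
  have lower : log (g x) ≤ log D + log (f x) := by
    rw [← log_abs (f x), ← log_abs (g x), ← log_mul hD.ne' (abs_ne_zero.2 hfx)]
    exact log_le_log (abs_pos.2 hgx) hg_le
  rw [norm_one, mul_one, norm_eq_abs, abs_le']
  exact ⟨le_max_of_le_left (by linarith), le_max_of_le_right (by linarith)⟩

theorem tendsto_log_div_log_of_isTheta_rpow (hu : Tendsto u l atTop)
    (hf : f =Θ[l] fun x => u x ^ β) :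
    Tendsto (fun x => log (f x) / log (u x)) l (𝓝 β) := by
  have hlog : Tendsto (fun x => log (u x)) l atTop := tendsto_log_atTop.comp hu
  have hu_pos : ∀ᶠ x in l, 0 < u x := hu.eventually_gt_atTop 0
  have herror : (fun x => log (f x) - log (u x ^ β)) =o[l] fun x => log (u x) :=
    (isBigO_one_log_sub_log hf (hu_pos.mono fun x hx => (rpow_pos_of_pos hx β).ne')).trans_isLittleO
      ((isLittleO_one_left_iff ℝ).2 (tendsto_norm_atTop_atTop.comp hlog))
  have hlimit := herror.tendsto_div_nhds_zero.add_const β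
  rw [zero_add] at hlimit
  refine hlimit.congr' ?_
  filter_upwards [hu_pos, hlog.eventually_gt_atTop 0] with x hx hlogx
  rw [log_rpow hx]
  field_simp
  ring

theorem tendsto_logb_div_logb_of_isTheta_rpow (hb : log b ≠ 0) (hu : Tendsto u l atTop)
    (hf : f =Θ[l] fun x => u x ^ β) :
    Tendsto (fun x => logb b (f x) / logb b (u x)) l (𝓝 β) := by
  simpa only [logb, div_div_div_cancel_right₀ hb] using tendsto_log_div_log_of_isTheta_rpow hu hf

theorem isBigO_rpow_rpow_of_le (hu : Tendsto u l atTop) (hab : a ≤ b) :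
    (fun x => u x ^ a) =O[l] fun x => u x ^ b := by
  refine IsBigO.of_bound' ?_
  filter_upwards [hu.eventually_ge_atTop 1] with x hx
  have hx0 : 0 ≤ u x := zero_le_one.trans hx
  rw [norm_of_nonneg (rpow_nonneg hx0 a), norm_of_nonneg (rpow_nonneg hx0 b)]
  exact rpow_le_rpow_of_exponent_le hx hab

theorem isLittleO_rpow_rpow_of_lt (hu : Tendsto u l atTop) (hab : a < b) :
    (fun x => u x ^ a) =o[l] fun x => u x ^ b := by
  have hu_pos : ∀ᶠ x in l, 0 < u x := hu.eventually_gt_atTop 0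
  refine (isLittleO_iff_tendsto' (hu_pos.mono fun x hx h =>
    absurd h (rpow_pos_of_pos hx b).ne')).2 ?_
  refine ((tendsto_rpow_neg_atTop (sub_pos.2 hab)).comp hu).congr' ?_
  filter_upwards [hu_pos] with x hx
  rw [Function.comp_apply, neg_sub, rpow_sub hx]

theorem isTheta_add_rpow_max (hu : Tendsto u l atTop) (hf0 : 0 ≤ᶠ[l] f) (hg0 : 0 ≤ᶠ[l] g)
    (hf : f =Θ[l] fun x => u x ^ a) (hg : g =Θ[l] fun x => u x ^ b) :
    (fun x => f x + g x) =Θ[l] fun x => u x ^ max a b := by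
  have f_le : f =O[l] fun x => f x + g x := IsBigO.of_bound' <| by
    filter_upwards [hf0, hg0] with x hfx hgx
    exact abs_le_abs_of_nonneg hfx (le_add_of_nonneg_right hgx)
  have g_le : g =O[l] fun x => f x + g x := IsBigO.of_bound' <| by
    filter_upwards [hf0, hg0] with x hfx hgx
    exact abs_le_abs_of_nonneg hgx (le_add_of_nonneg_left hfx)
  constructor
  · exact (hf.isBigO.trans (isBigO_rpow_rpow_of_le hu (le_max_left a b))).add
      (hg.isBigO.trans (isBigO_rpow_rpow_of_le hu (le_max_right a b)))
  · rcases max_choice a b with hmax | hmax <;> rw [hmax]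
    · exact hf.isBigO_symm.trans f_le
    · exact hg.isBigO_symm.trans g_le

end GrowthExponent

theorem isTheta_one_add_const_mul_rpow (α : ℝ) {c : ℝ} (hc : 0 < c) :
    (fun s : ℝ => 1 + c * s ^ α) =Θ[atTop] fun s => s ^ max 0 α := by
  refine isTheta_add_rpow_max tendsto_id (Eventually.of_forall fun _ => zero_le_one) ?_ ?_ ?_
  · filter_upwards [eventually_ge_atTop 0] with s hs
    exact mul_nonneg hc.le (rpow_nonneg hs α)
  · simpa only [rpow_zero] using isTheta_rfl
  · exact (isTheta_const_mul_left hc.ne').2 isTheta_rfl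

theorem isTheta_one_add_rpow (α : ℝ) :
    (fun s : ℝ => 1 + s ^ α) =Θ[atTop] fun s => s ^ max 0 α := by
  simpa only [one_mul] using isTheta_one_add_const_mul_rpow α one_pos

theorem isTheta_one_add_self_add_rpow (α : ℝ) :
    (fun s : ℝ => 1 + s + s ^ α) =Θ[atTop] fun s => s ^ max 1 α := by
  have hone_add : (fun s : ℝ => 1 + s) =Θ[atTop] fun s => s ^ (1 : ℝ) := by
    simpa only [rpow_one, max_eq_right zero_le_one] using isTheta_one_add_rpow 1
  refine isTheta_add_rpow_max tendsto_id ?_ ?_ hone_add isTheta_rfl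
  · filter_upwards [eventually_ge_atTop 0] with s hs
    exact add_nonneg zero_le_one hs
  · filter_upwards [eventually_ge_atTop 0] with s hs
    exact rpow_nonneg hs α

theorem isTheta_secondRate_numerator (α : ℝ) :
    (fun s : ℝ => (1 + s + s ^ α) ^ 2 - s / (1 + s ^ α)) =Θ[atTop]
      fun s => s ^ (2 * max 1 α) := by
  have hsq : (fun s : ℝ => (1 + s + s ^ α) ^ 2) =Θ[atTop] fun s => s ^ (2 * max 1 α) := by
    refine ((isTheta_one_add_self_add_rpow α).pow 2).trans_eventuallyEq ?_
    filter_upwards [eventually_ge_atTop 0] with s hs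
    rw [mul_comm, rpow_mul hs, rpow_two]
  have hdiv : (fun s : ℝ => s / (1 + s ^ α)) =Θ[atTop] fun s => s ^ (1 - max 0 α) := by
    refine ((isTheta_refl (fun s : ℝ => s) atTop).div
      (isTheta_one_add_rpow α)).trans_eventuallyEq ?_
    filter_upwards [eventually_gt_atTop 0] with s hs
    rw [rpow_sub hs, rpow_one]
  have hexponent : 1 - max 0 α < 2 * max 1 α := by
    linarith [le_max_left 0 α, le_max_left 1 α]
  have hsmall := hdiv.trans_isLittleO (isLittleO_rpow_rpow_of_lt tendsto_id hexponent)
  simp only [sub_eq_add_neg]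
  exact hsq.add_isLittleO hsmall.neg_left

theorem isTheta_secondRate_argument (α : ℝ) :
    (fun s : ℝ => ((1 + s + s ^ α) ^ 2 - s / (1 + s ^ α)) / (1 + 2 * s ^ α)) =Θ[atTop]
      fun s => s ^ (2 * max 1 α - max 0 α) := by
  refine ((isTheta_secondRate_numerator α).div
    (isTheta_one_add_const_mul_rpow α two_pos)).trans_eventuallyEq ?_
  filter_upwards [eventually_gt_atTop 0] with s hs
  rw [rpow_sub hs]

theorem max_half_rate_exponents (α : ℝ) :
    max (1 / 2 * max 0 α) (1 / 2 * (2 * max 1 α - max 0 α)) =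
      max (max 0 α / 2) (1 - max 0 α / 2) := by
  grind

theorem achievable_gdof_general (α : ℝ) :
    Tendsto (fun s : ℝ =>
        max ((1 / 2) * logb 2 (1 + s ^ α))
          ((1 / 2) * logb 2 (((1 + s + s ^ α) ^ 2 - s / (1 + s ^ α)) /
              (1 + 2 * s ^ α))) / logb 2 s)
      atTop (𝓝 (max (max 0 α / 2) (1 - max 0 α / 2))) := by
  have hlog_two : log 2 ≠ 0 := (log_pos one_lt_two).ne'
  have hfirst := tendsto_logb_div_logb_of_isTheta_rpow hlog_two tendsto_id
    (isTheta_one_add_rpow α)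
  have hsecond := tendsto_logb_div_logb_of_isTheta_rpow hlog_two tendsto_id
    (isTheta_secondRate_argument α)
  rw [← max_half_rate_exponents]
  refine ((hfirst.const_mul (1 / 2)).max (hsecond.const_mul (1 / 2))).congr' ?_
  filter_upwards [eventually_gt_atTop 1] with s hs
  rw [id_eq, ← max_div_div_right (logb_pos one_lt_two hs).le, mul_div_assoc, mul_div_assoc]

/-- Generalized degrees-of-freedom of the symmetric achievable feedback rate:
the "V curve" `max(α/2, 1 − α/2)`. -/
theorem achievable_gdof (α : ℝ) (hα : 0 ≤ α) :
    Tendsto (fun s : ℝ =>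
        max ((1 / 2) * Real.logb 2 (1 + s ^ α))
          ((1 / 2) * Real.logb 2 (((1 + s + s ^ α) ^ 2 - s / (1 + s ^ α)) /
              (1 + 2 * s ^ α))) / Real.logb 2 s)
      atTop (nhds (max (α / 2) (1 - α / 2))) := by
  simpa only [max_eq_right hα] using achievable_gdof_general α
end
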